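/- For all integers m and n with 0 ≤ n < |m|(|m|+5)/2 + 4, the number of strongly concave compositions of n with rank m equals the number of integer partitions of n − |m|(|m|+1)/2; that is, V_d(m, n) = p(n − |m|(|m|+1)/2), where p(k) = 0 when k < 0. -/

import Mathlib

open scoped BigOperators

/-- `IsSCC n l k` says that the list `l = (a_1, ..., a_s)` of nonnegative integers
is a strongly concave composition of `n` with central part at (1-indexed) position `k`:
`a_1 > a_2 > ... > a_{k-1} > a_k < a_{k+1} < ... < a_s` and `a_1 + ... + a_s = n`. -/
def IsSCC (n : ℕ) (l : List ℕ) (k : ℕ) : Prop :=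
  1 ≤ k ∧ k ≤ l.length ∧ l.sum = n ∧
  (∀ i j : Fin l.length, (i : ℕ) < j → (j : ℕ) < k → l.get j < l.get i) ∧
  (∀ i j : Fin l.length, k - 1 ≤ (i : ℕ) → (i : ℕ) < j → l.get i < l.get j)

/-- The rank `s - 2k + 1` of a strongly concave composition with `s` parts and
central part at position `k`. -/
def sccRank (l : List ℕ) (k : ℕ) : ℤ := (l.length : ℤ) - 2 * k + 1

/-- `Vd m n` is the number of strongly concave compositions of `n` with rank `m`. -/
noncomputable def Vd (m : ℤ) (n : ℕ) : ℕ :=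
  Set.ncard {p : List ℕ × ℕ | IsSCC n p.1 p.2 ∧ sccRank p.1 p.2 = m}

/-- `VdTotal n` is the total number of strongly concave compositions of `n`. -/
noncomputable def VdTotal (n : ℕ) : ℕ :=
  Set.ncard {p : List ℕ × ℕ | IsSCC n p.1 p.2}

/-- The partition function, extended by `0` to negative integers. -/
def partitionCount (k : ℤ) : ℕ :=
  if 0 ≤ k then Fintype.card (Nat.Partition k.toNat) else 0

def tri : ℕ → ℕ
  | 0 => 0
  | k+1 => tri k + (k+1)

lemma two_tri (k : ℕ) : 2 * tri k = k * (k+1) := by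
  induction k with
  | zero => rfl
  | succ k ih => rw [tri, mul_add, ih]; ring

lemma tri_mono {a b : ℕ} (h : a ≤ b) : tri a ≤ tri b := by
  induction h with
  | refl => exact le_rfl
  | step _ ih => exact ih.trans (by simp [tri])

/-- partitions of N with parts at most k -/
def pP : ℕ → ℕ → ℕ
  | 0, N => if N = 0 then 1 else 0
  | k+1, N => pP k N + (if _h : k + 1 ≤ N then pP (k+1) (N - (k+1)) else 0)
termination_by k N => (k, N)

def Sset (k N : ℕ) : Set (Multiset ℕ) := {s | s.sum = N ∧ ∀ i ∈ s, 1 ≤ i ∧ i ≤ k}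

lemma Sset_zero (N : ℕ) : (Sset 0 N).encard = (pP 0 N : ℕ∞) := by
  rw [pP]
  by_cases hN : N = 0
  · have : Sset 0 N = {0} := by
      ext s
      simp only [Sset, Set.mem_ofPred_eq, Set.mem_singleton_iff]
      constructor
      · rintro ⟨_, h⟩
        refine Multiset.eq_zero_of_forall_notMem fun i hi => ?_
        have := h i hi
        omega
      · rintro rfl
        simp [hN]
    rw [this]; simp [hN]
  · have : Sset 0 N = ∅ := by
      ext s
      simp only [Sset, Set.mem_ofPred_eq, Set.mem_empty_iff_false, iff_false]
      rintro ⟨h1, h⟩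
      have : s = 0 := by
        refine Multiset.eq_zero_of_forall_notMem fun i hi => ?_
        have := h i hi
        omega
      subst this
      simp at h1
      omega
    rw [this]; simp [hN]

lemma Sset_card (k N : ℕ) : (Sset k N).encard = (pP k N : ℕ∞) := by
  induction k generalizing N with
  | zero => exact Sset_zero N
  | succ k ihk =>
    induction N using Nat.strong_induction_on with
    | _ N ih =>
      rw [pP]
      by_cases hN : k + 1 ≤ N
      · have hU : Sset (k+1) N = Sset k N ∪ (fun s => (k+1) ::ₘ s) '' Sset (k+1) (N - (k+1)) := by
          ext s
          simp only [Sset, Set.mem_union, Set.mem_image, Set.mem_ofPred_eq]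
          constructor
          · rintro ⟨h1, h2⟩
            by_cases hk : k + 1 ∈ s
            · right
              obtain ⟨t, rfl⟩ := Multiset.exists_cons_of_mem hk
              refine ⟨t, ⟨?_, fun i hi => h2 i (Multiset.mem_cons_of_mem hi)⟩, rfl⟩
              simp at h1
              omega
            · left
              refine ⟨h1, fun i hi => ?_⟩
              have := h2 i hi
              have : i ≠ k + 1 := by rintro rfl; exact hk hi
              omega
          · rintro (⟨h1, h2⟩ | ⟨t, ⟨h1, h2⟩, rfl⟩)
            · refine ⟨h1, fun i hi => ?_⟩
              have := h2 i hi
              omega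
            · refine ⟨?_, fun i hi => ?_⟩
              · simp; omega
              · rcases Multiset.mem_cons.1 hi with rfl | hi
                · omega
                · exact h2 i hi
        rw [hU, Set.encard_union_eq, ihk, Set.InjOn.encard_image, ih _ (by omega)]
        · simp [hN]
        · intro a _ b _ hab
          simpa using hab
        · rw [Set.disjoint_left]
          rintro s ⟨_, h2⟩ ⟨t, _, rfl⟩
          have := h2 (k+1) (by simp)
          omega
      · have hU : Sset (k+1) N = Sset k N := by
          ext s
          simp only [Sset, Set.mem_ofPred_eq]
          constructor
          · rintro ⟨h1, h2⟩
            refine ⟨h1, fun i hi => ?_⟩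
            have := h2 i hi
            have := Multiset.le_sum_of_mem hi
            omega
          · rintro ⟨h1, h2⟩
            refine ⟨h1, fun i hi => ?_⟩
            have := h2 i hi
            omega
        rw [hU, ihk]
        simp [hN]

lemma pP_eq_partition (k N : ℕ) (h : N ≤ k) : pP k N = Fintype.card (Nat.Partition N) := by
  have h1 : Sset k N = Set.range (fun p : Nat.Partition N => p.parts) := by
    ext s
    simp only [Sset, Set.mem_ofPred_eq, Set.mem_range]
    constructor
    · rintro ⟨h1, h2⟩
      exact ⟨⟨s, fun {i} hi => (h2 i hi).1, h1⟩, rfl⟩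
    · rintro ⟨p, rfl⟩
      refine ⟨p.parts_sum, fun i hi => ⟨p.parts_pos hi, ?_⟩⟩
      have := Multiset.le_sum_of_mem hi
      have := p.parts_sum
      omega
  have h2 := Sset_card k N
  rw [h1, ← Set.image_univ, Set.InjOn.encard_image, Set.encard_univ] at h2
  · rw [ENat.card_eq_coe_fintype_card] at h2
    exact_mod_cast h2.symm
  · intro a _ b _ hab
    exact Nat.Partition.ext hab

lemma pP_stable (k N : ℕ) (j : ℕ) (h : N ≤ k) : pP (k + j) N = pP k N := by
  rw [pP_eq_partition _ _ (by omega), pP_eq_partition _ _ h]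

def Tset (k n : ℕ) : Set (List ℕ) :=
  {l | (0 :: l).Pairwise (· < ·) ∧ l.length = k ∧ l.sum = n}

lemma sum_lower (c : ℕ) (l : List ℕ) (h : (c :: l).Pairwise (· < ·)) :
    tri l.length + c * l.length ≤ l.sum := by
  induction l generalizing c with
  | nil => simp [tri]
  | cons b l ih =>
    have h1 := ih b (List.Pairwise.of_cons h)
    have h2 : c < b := (List.pairwise_cons.1 h).1 b (by simp)
    have h3 : (c + 1) * l.length ≤ b * l.length := Nat.mul_le_mul_right _ h2
    simp only [List.length_cons, List.sum_cons, tri]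
    nlinarith

lemma Tset_empty (k n : ℕ) (h : n < tri k) : Tset k n = ∅ := by
  ext l
  simp only [Tset, Set.mem_ofPred_eq, Set.mem_empty_iff_false, iff_false]
  rintro ⟨h1, rfl, rfl⟩
  have := sum_lower 0 l h1
  omega

lemma sum_map_succ (l : List ℕ) : (l.map (· + 1)).sum = l.sum + l.length := by
  induction l with
  | nil => rfl
  | cons a l ih => simp only [List.map_cons, List.sum_cons, List.length_cons, ih]; omega

lemma pw_map_succ (c : ℕ) (l : List ℕ) :
    ((c + 1) :: l.map (· + 1)).Pairwise (· < ·) ↔ (c :: l).Pairwise (· < ·) := by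
  rw [← List.map_cons (f := (· + 1)), List.pairwise_map]
  simp

lemma exists_map_succ (c : ℕ) (l : List ℕ) (h : ((c + 1) :: l).Pairwise (· < ·)) :
    ∃ t : List ℕ, l = t.map (· + 1) ∧ (c :: t).Pairwise (· < ·) := by
  have h0 : l = (l.map (· - 1)).map (· + 1) := by
    rw [List.map_map]
    symm
    conv_rhs => rw [← List.map_id l]
    apply List.map_congr_left
    intro x hx
    have := (List.pairwise_cons.1 h).1 x hx
    simp; omega
  refine ⟨_, h0, ?_⟩
  rw [← pw_map_succ, ← h0]
  exact h

lemma pw_weaken {c d : ℕ} {l : List ℕ} (hcd : c ≤ d) (h : (d :: l).Pairwise (· < ·)) :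
    (c :: l).Pairwise (· < ·) := by
  rw [List.pairwise_cons] at *
  exact ⟨fun x hx => lt_of_le_of_lt hcd (h.1 x hx), h.2⟩

lemma Tset_succ (k n : ℕ) : Tset (k+1) (n + (k+1)) =
    (List.map (· + 1)) '' Tset (k+1) n ∪ (fun l => 1 :: l.map (· + 1)) '' Tset k n := by
  ext l
  simp only [Tset, Set.mem_union, Set.mem_image, Set.mem_ofPred_eq]
  constructor
  · rintro ⟨h1, h2, h3⟩
    match l, h1, h2, h3 with
    | b :: r, h1, h2, h3 =>
      have hb : 0 < b := (List.pairwise_cons.1 h1).1 b (by simp)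
      by_cases hb1 : b = 1
      · right
        subst hb1
        obtain ⟨t, rfl, ht⟩ := exists_map_succ 0 r h1.of_cons
        simp only [List.sum_cons, sum_map_succ, List.length_cons, List.length_map] at h2 h3
        exact ⟨t, ⟨ht, by omega, by omega⟩, rfl⟩
      · left
        have h4 : (1 :: b :: r).Pairwise (· < ·) := by
          rw [List.pairwise_cons]
          refine ⟨?_, h1.of_cons⟩
          intro x hx
          rcases List.mem_cons.1 hx with rfl | hx
          · omega
          · have := (List.pairwise_cons.1 h1.of_cons).1 x hx
            omega
        obtain ⟨t, ht0, ht⟩ := exists_map_succ 0 _ h4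
        rw [ht0, sum_map_succ] at h3
        rw [ht0, List.length_map] at h2
        exact ⟨t, ⟨ht, by omega, by omega⟩, ht0.symm⟩
  · rintro (⟨t, ⟨h1, h2, h3⟩, rfl⟩ | ⟨t, ⟨h1, h2, h3⟩, rfl⟩)
    · refine ⟨pw_weaken (Nat.zero_le 1) ((pw_map_succ 0 t).2 h1), by simpa using h2, ?_⟩
      rw [sum_map_succ]; omega
    · refine ⟨?_, by simpa using h2, ?_⟩
      · rw [List.pairwise_cons]
        refine ⟨?_, (pw_map_succ 0 t).2 h1⟩
        intro x hx
        simp at hx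
        omega
      · rw [List.sum_cons, sum_map_succ]; omega

lemma map_succ_inj : Function.Injective (List.map (· + 1 : ℕ → ℕ)) :=
  List.map_injective_iff.2 (add_left_injective 1)

lemma Tset_succ_card (k n : ℕ) :
    (Tset (k+1) (n + (k+1))).encard = (Tset (k+1) n).encard + (Tset k n).encard := by
  rw [Tset_succ, Set.encard_union_eq, Set.InjOn.encard_image, Set.InjOn.encard_image]
  · intro a _ b _ hab
    simp only [List.cons.injEq, true_and] at hab
    exact map_succ_inj hab
  · exact map_succ_inj.injOn
  · rw [Set.disjoint_left]
    rintro s ⟨t, ⟨h1, _⟩, rfl⟩ ⟨u, _, h⟩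
    have h2 : 1 ∈ t.map (· + 1) := by
      rw [← h]; simp
    simp only [List.mem_map] at h2
    obtain ⟨x, hx, hx1⟩ := h2
    have := (List.pairwise_cons.1 h1).1 x hx
    omega

lemma Tset_card (k N : ℕ) : (Tset k (tri k + N)).encard = (pP k N : ℕ∞) := by
  induction k generalizing N with
  | zero =>
    rw [pP]
    by_cases hN : N = 0
    · have : Tset 0 (tri 0 + N) = {[]} := by
        ext s
        simp only [Tset, Set.mem_ofPred_eq, Set.mem_singleton_iff, List.length_eq_zero_iff, tri]
        constructor
        · exact fun h => h.2.1
        · rintro rfl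
          simp [hN]
      rw [this]; simp [hN]
    · have : Tset 0 (tri 0 + N) = ∅ := by
        ext s
        simp only [Tset, Set.mem_ofPred_eq, Set.mem_empty_iff_false, iff_false,
          List.length_eq_zero_iff, tri]
        rintro ⟨_, rfl, h⟩
        simp at h
        omega
      rw [this]; simp [hN]
  | succ k ihk =>
    induction N using Nat.strong_induction_on with
    | _ N ih =>
      rw [pP, show tri (k+1) + N = (tri k + N) + (k+1) by rw [tri]; ring, Tset_succ_card, ihk]
      by_cases hN : k + 1 ≤ N
      · rw [show tri k + N = tri (k+1) + (N - (k+1)) by rw [tri]; omega, ih _ (by omega)]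
        simp [hN, add_comm]
      · rw [Tset_empty (k+1) (tri k + N) (by rw [tri]; omega)]
        simp [hN]

def Uset (M n j : ℕ) : Set (ℕ × List ℕ) :=
  {p | p.1 < j ∧ (0 :: p.2).Pairwise (· < ·) ∧ p.2.length = M + 1 ∧ p.1 + p.2.sum = n}

lemma Uset_card (M N j : ℕ) (hN : N < 2 * M + 4) :
    (Uset M (tri M + N) j).encard + (pP M N : ℕ∞) = (pP (M + j) N : ℕ∞) := by
  induction j with
  | zero =>
    have : Uset M (tri M + N) 0 = ∅ := by
      ext; simp [Uset]
    simp [this]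
  | succ j ih =>
    rw [← add_assoc, pP]
    by_cases hj : M + j + 1 ≤ N
    · have hU : Uset M (tri M + N) (j+1) = Uset M (tri M + N) j ∪
          (fun l => (j, l)) '' Tset (M+1) (tri (M+1) + (N - (M + j + 1))) := by
        ext ⟨a, l⟩
        simp only [Uset, Tset, Set.mem_union, Set.mem_image, Set.mem_ofPred_eq, Prod.mk.injEq, tri]
        constructor
        · rintro ⟨h1, h2, h3, h4⟩
          by_cases haj : a = j
          · right
            exact ⟨l, ⟨h2, h3, by omega⟩, haj.symm, rfl⟩
          · left
            exact ⟨by omega, h2, h3, h4⟩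
        · rintro (⟨h1, h2, h3, h4⟩ | ⟨t, ⟨h1, h2, h3⟩, rfl, rfl⟩)
          · exact ⟨by omega, h2, h3, h4⟩
          · exact ⟨by omega, h1, h2, by omega⟩
      have hst : pP (M + j + 1) (N - (M + j + 1)) = pP (M+1) (N - (M + j + 1)) := by
        by_cases hj0 : j = 0
        · subst hj0; rfl
        · rw [show M + j + 1 = (M + 1) + j by ring]
          exact pP_stable _ _ _ (by omega)
      rw [hU, Set.encard_union_eq, Set.InjOn.encard_image, Tset_card, dif_pos hj, hst, Nat.cast_add,
        ← ih]
      · ring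
      · intro a _ b _ hab
        simpa using hab
      · rw [Set.disjoint_left]
        rintro s ⟨h1, _⟩ ⟨t, _, rfl⟩
        simp at h1
    · have hU : Uset M (tri M + N) (j+1) = Uset M (tri M + N) j := by
        ext ⟨a, l⟩
        simp only [Uset, Set.mem_ofPred_eq]
        constructor
        · rintro ⟨h1, h2, h3, h4⟩
          refine ⟨?_, h2, h3, h4⟩
          have := sum_lower 0 l h2
          rw [h3, tri] at this
          omega
        · rintro ⟨h1, h2⟩
          exact ⟨by omega, h2⟩
      rw [hU, ih]
      simp [hj]

def Wset (m : ℤ) (n : ℕ) : Set (List ℕ × ℕ × List ℕ) :=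
  {p | (p.2.1 :: p.1).Pairwise (· < ·) ∧ (p.2.1 :: p.2.2).Pairwise (· < ·) ∧
    p.1.sum + p.2.1 + p.2.2.sum = n ∧ (p.2.2.length : ℤ) - p.1.length = m}

def gmap (p : ℕ × List ℕ) : List ℕ × ℕ × List ℕ :=
  if p.1 = 0 then ([], p.2.headI, p.2.tail) else ([p.1], 0, p.2)

lemma Wset_eq (M n : ℕ) (h : n < tri M + 2 * M + 4) :
    Wset M n = (fun R => ([], 0, R)) '' Tset M n ∪ gmap '' Uset M n (n+1) := by
  ext ⟨L, c, R⟩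
  simp only [Wset, Tset, Uset, Set.mem_union, Set.mem_image, Set.mem_ofPred_eq]
  constructor
  · rintro ⟨h1, h2, h3, h4⟩
    have hl := sum_lower _ _ h1
    have hr := sum_lower _ _ h2
    have hlen : R.length = M + L.length := by omega
    by_cases hc : c = 0
    · subst hc
      match L, h1, h3, h4, hl, hlen with
      | [], h1, h3, h4, hl, hlen =>
        left
        refine ⟨R, ⟨h2, by simpa using hlen, by simpa using h3⟩, rfl⟩
      | [a], h1, h3, h4, hl, hlen =>
        right
        simp at h1 h3 hlen
        refine ⟨(a, R), ⟨by simp; omega, h2, hlen, h3⟩, ?_⟩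
        simp [gmap]; omega
      | a :: b :: L, h1, h3, h4, hl, hlen =>
        exfalso
        rw [hlen] at hr
        have e1 : tri (M + 2) ≤ tri (M + (a :: b :: L).length) := tri_mono (by simp)
        have e2 : tri 2 ≤ tri (a :: b :: L).length := tri_mono (by simp)
        simp only [tri] at e1 e2
        omega
    · have hL : L = [] := by
        by_contra hL
        have hpos : 1 ≤ L.length := by
          rcases L with _ | ⟨a, L⟩
          · simp at hL
          · simp
        have e1 : tri (M + 1) ≤ tri R.length := tri_mono (by omega)
        have e2 : tri 1 ≤ tri L.length := tri_mono hpos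
        have e3 : 1 * (M + 1) ≤ c * R.length := Nat.mul_le_mul (by omega) (by omega)
        have e4 : 1 * 1 ≤ c * L.length := Nat.mul_le_mul (by omega) hpos
        simp only [tri] at e1 e2
        omega
      subst hL
      right
      refine ⟨(0, c :: R), ⟨by simp, ?_, by simpa using hlen, by simpa using h3⟩, by simp [gmap]⟩
      simp only [List.pairwise_cons (a := 0)]
      refine ⟨?_, h2⟩
      intro x hx
      rcases List.mem_cons.1 hx with rfl | hx
      · omega
      · have := (List.pairwise_cons.1 h2).1 x hx
        omega
  · rintro (⟨R', ⟨h1, h2, h3⟩, he⟩ | ⟨⟨a, l⟩, ⟨h1, h2, h3, h4⟩, he⟩)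
    · simp only [Prod.mk.injEq] at he
      obtain ⟨rfl, rfl, rfl⟩ := he
      exact ⟨by simp, h1, by simpa using h3, by simp; omega⟩
    · unfold gmap at he
      by_cases ha : a = 0
      · subst ha
        match l, h2, h3, h4, he with
        | b :: r, h2, h3, h4, he =>
          simp at he
          obtain ⟨rfl, rfl, rfl⟩ := he
          refine ⟨by simp, h2.of_cons, by simpa using h4, ?_⟩
          simp at h3 ⊢
          omega
      · simp [ha] at he
        obtain ⟨rfl, rfl, rfl⟩ := he
        refine ⟨by simp; omega, h2, by simpa using h4, ?_⟩
        simp at h3 ⊢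
        omega

lemma Wset_card (M n : ℕ) (h : n < tri M + 2 * M + 4) :
    (Wset M n).encard = (Tset M n).encard + (Uset M n (n+1)).encard := by
  rw [Wset_eq M n h, Set.encard_union_eq, Set.InjOn.encard_image, Set.InjOn.encard_image]
  · rintro ⟨a, l⟩ ⟨_, _, h3, _⟩ ⟨b, r⟩ ⟨_, _, h3', _⟩ hab
    rcases l with _ | ⟨x, l⟩
    · simp at h3
    rcases r with _ | ⟨y, r⟩
    · simp at h3'
    unfold gmap at hab
    by_cases ha : a = 0 <;> by_cases hb : b = 0 <;> simp [ha, hb] at hab ⊢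
    · exact hab
    · exact hab
  · intro a _ b _ hab
    simpa using hab
  · rw [Set.disjoint_left]
    rintro s ⟨t, _, rfl⟩ ⟨⟨a, l⟩, ⟨_, h2, h3, _⟩, he⟩
    rcases l with _ | ⟨x, l⟩
    · simp at h3
    have hx := (List.pairwise_cons.1 h2).1 x (by simp)
    unfold gmap at he
    by_cases ha : a = 0 <;> simp [ha] at he
    omega

lemma Wset_neg (m : ℤ) (n : ℕ) : (Wset (-m) n).encard = (Wset m n).encard := by
  have : Wset (-m) n = (fun p : List ℕ × ℕ × List ℕ => (p.2.2, p.2.1, p.1)) '' Wset m n := by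
    ext ⟨L, c, R⟩
    simp only [Wset, Set.mem_image, Set.mem_ofPred_eq]
    constructor
    · rintro ⟨h1, h2, h3, h4⟩
      exact ⟨(R, c, L), ⟨h2, h1, by simp only; omega, by simp only; omega⟩, rfl⟩
    · rintro ⟨⟨L', c', R'⟩, ⟨h1, h2, h3, h4⟩, he⟩
      simp only [Prod.mk.injEq] at he
      obtain ⟨rfl, rfl, rfl⟩ := he
      exact ⟨h2, h1, by simp only at h3; omega, by simp only at h4; omega⟩
  rw [this, Set.InjOn.encard_image]
  rintro ⟨L, c, R⟩ _ ⟨L', c', R'⟩ _ he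
  simp only [Prod.mk.injEq] at he ⊢
  tauto

lemma Wset_abs (m : ℤ) (n : ℕ) : (Wset m n).encard = (Wset (m.natAbs : ℤ) n).encard := by
  rcases Int.natAbs_eq m with h | h
  · rw [← h]
  · conv_lhs => rw [h]
    exact Wset_neg _ _

def fmap (p : List ℕ × ℕ × List ℕ) : List ℕ × ℕ := (p.1.reverse ++ p.2.1 :: p.2.2, p.1.length + 1)

lemma fmap_inj : Function.Injective fmap := by
  rintro ⟨L, c, R⟩ ⟨L', c', R'⟩ h
  simp only [fmap, Prod.mk.injEq] at h
  obtain ⟨h1, h2⟩ := h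
  have := List.append_inj h1 (by simpa using h2)
  simp at this
  simp; tauto

lemma SCC_iff (n : ℕ) (L : List ℕ) (c : ℕ) (R : List ℕ) :
    IsSCC n (L.reverse ++ c :: R) (L.length + 1) ↔
      (c :: L).Pairwise (· < ·) ∧ (c :: R).Pairwise (· < ·) ∧ L.sum + c + R.sum = n := by
  have key1 : (∀ i j : Fin (L.reverse ++ c :: R).length, (i : ℕ) < j → (j : ℕ) < L.length + 1 →
      (L.reverse ++ c :: R).get j < (L.reverse ++ c :: R).get i) ↔
      (c :: L).Pairwise (· < ·) := by
    rw [← List.pairwise_reverse, List.pairwise_iff_getElem, List.reverse_cons]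
    have hget : ∀ (i : ℕ) (h1 : i < (L.reverse ++ c :: R).length)
        (h2 : i < (L.reverse ++ [c]).length),
        (L.reverse ++ c :: R)[i] = (L.reverse ++ [c])[i] := by
      intro i h1 h2
      have : L.reverse ++ c :: R = (L.reverse ++ [c]) ++ R := by simp
      simp only [this]
      rw [List.getElem_append_left h2]
    constructor
    · intro h i j hi hj hij
      have hj' : j < L.length + 1 := by simpa using hj
      have := h ⟨i, by simp; omega⟩ ⟨j, by simp; omega⟩ hij hj'
      simp only [List.get_eq_getElem] at this
      rw [hget i _ hi, hget j _ hj] at this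
      exact this
    · intro h i j hij hj
      have := h i j (by simp; omega) (by simp; omega) hij
      simp only [List.get_eq_getElem]
      rw [hget i _ (by simp; omega), hget j _ (by simp; omega)]
      exact this
  have key2 : (∀ i j : Fin (L.reverse ++ c :: R).length, L.length + 1 - 1 ≤ (i : ℕ) → (i : ℕ) < j →
      (L.reverse ++ c :: R).get i < (L.reverse ++ c :: R).get j) ↔
      (c :: R).Pairwise (· < ·) := by
    rw [List.pairwise_iff_getElem]
    constructor
    · intro h i j hi hj hij
      have := h ⟨L.length + i, by simp at hi ⊢; omega⟩ ⟨L.length + j, by simp at hj ⊢; omega⟩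
        (by simp) (by simpa using hij)
      simp only [List.get_eq_getElem] at this
      rw [List.getElem_append_right (by simp), List.getElem_append_right (by simp)] at this
      simpa using this
    · intro h i j hi hij
      have hi2 := i.2
      have hj2 := j.2
      simp only [List.length_append, List.length_reverse, List.length_cons] at hi2 hj2
      have := h (i - L.length) (j - L.length) (by simp; omega) (by simp; omega) (by omega)
      simp only [List.get_eq_getElem]
      rw [List.getElem_append_right (by simp; omega), List.getElem_append_right (by simp; omega)]
      simpa using this
  unfold IsSCC
  rw [key1, key2]
  simp only [List.sum_append, List.sum_reverse, List.sum_cons, List.length_append,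
    List.length_reverse, List.length_cons]
  constructor
  · rintro ⟨_, _, h1, h2, h3⟩
    exact ⟨h2, h3, by omega⟩
  · rintro ⟨h2, h3, h1⟩
    exact ⟨by omega, by omega, by omega, h2, h3⟩

lemma Vset_eq (m : ℤ) (n : ℕ) :
    {p : List ℕ × ℕ | IsSCC n p.1 p.2 ∧ sccRank p.1 p.2 = m} = fmap '' Wset m n := by
  ext ⟨l, k⟩
  simp only [Wset, Set.mem_image, Set.mem_ofPred_eq]
  have hrank : ∀ (L : List ℕ) (c : ℕ) (R : List ℕ), sccRank (L.reverse ++ c :: R) (L.length + 1) =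
      (R.length : ℤ) - L.length := by
    intro L c R
    simp [sccRank]
    ring
  constructor
  · rintro ⟨h1, h2⟩
    have hk1 := h1.1
    have hk2 := h1.2.1
    have hl : l = ((l.take (k-1)).reverse).reverse ++ l[k-1] :: l.drop k := by
      rw [List.reverse_reverse]
      conv_lhs => rw [← List.take_append_drop (k-1) l, List.drop_eq_getElem_cons (by omega)]
      rw [show k - 1 + 1 = k by omega]
    have hk : k = ((l.take (k-1)).reverse).length + 1 := by
      simp; omega
    generalize (l.take (k-1)).reverse = L at hl hk
    generalize l[k-1] = c at hl
    generalize l.drop k = R at hl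
    subst hl
    subst hk
    rw [SCC_iff] at h1
    rw [hrank] at h2
    exact ⟨(L, c, R), ⟨h1.1, h1.2.1, h1.2.2, h2⟩, rfl⟩
  · rintro ⟨⟨L, c, R⟩, ⟨h1, h2, h3, h4⟩, he⟩
    simp only [fmap, Prod.mk.injEq] at he
    obtain ⟨rfl, rfl⟩ := he
    rw [SCC_iff, hrank]
    exact ⟨⟨h1, h2, h3⟩, h4⟩

theorem stmt_1 (m : ℤ) (n : ℕ) (h : (n : ℤ) < |m| * (|m| + 5) / 2 + 4) :
    Vd m n = partitionCount ((n : ℤ) - |m| * (|m| + 1) / 2) := by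
  unfold Vd
  rw [Vset_eq, Set.ncard, Set.InjOn.encard_image fmap_inj.injOn, Wset_abs]
  rw [Int.abs_eq_natAbs] at *
  generalize m.natAbs = M at *
  have ht : ((M : ℤ) * (M + 1)) / 2 = (tri M : ℤ) := by
    have : (M : ℤ) * (M + 1) = 2 * (tri M : ℤ) := by exact_mod_cast (two_tri M).symm
    omega
  have ht2 : ((M : ℤ) * (M + 5)) / 2 = (tri M : ℤ) + 2 * M := by
    have : (M : ℤ) * (M + 1) = 2 * (tri M : ℤ) := by exact_mod_cast (two_tri M).symm
    have : (M : ℤ) * (M + 5) = 2 * ((tri M : ℤ) + 2 * M) := by linarith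
    omega
  rw [ht]
  rw [ht2] at h
  rw [Wset_card M n (by omega)]
  unfold partitionCount
  by_cases hn : tri M ≤ n
  · obtain ⟨N, rfl⟩ := Nat.exists_eq_add_of_le hn
    rw [Tset_card, add_comm, Uset_card _ _ _ (by omega), pP_eq_partition _ _ (by omega)]
    rw [if_pos (by omega), show (((tri M + N : ℕ) : ℤ) - (tri M : ℤ)).toNat = N by omega]
    simp
  · rw [if_neg (by omega), Tset_empty M n (by omega)]
    have : Uset M n (n+1) = ∅ := by
      ext ⟨a, l⟩
      simp only [Uset, Set.mem_ofPred_eq, Set.mem_empty_iff_false, iff_false]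
      rintro ⟨_, h2, h3, h4⟩
      have := sum_lower 0 l h2
      rw [h3, tri] at this
      omega
    simp [this]
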